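/- Let n be a positive integer and let X be the number of ones among n independent uniformly random bits (so X is Binomial(n, 1/2)-distributed, with expectation n/2). Then for every real t with 0 ≤ t ≤ √n/8, the probability that X − n/2 ≥ t·√n is at least e^{−4(t+1)²}/√(2π). -/

import Mathlib

open MeasureTheory
open scoped ENNReal

/-- The distribution of `n` independent uniformly random bits. -/
noncomputable def uniformBits (n : ℕ) : Measure (Fin n → Bool) :=
  Measure.pi fun _ => (PMF.bernoulli (1 / 2) (by norm_num)).toMeasure

/-- The number of ones among the bits `ω`. -/
def onesCount {n : ℕ} (ω : Fin n → Bool) : ℕ :=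
  (Finset.univ.filter fun i => ω i = true).card

/-!
Above the middle, consecutive binomial coefficients satisfy
`C(n, k + 1) / C(n, k) = (n - k) / (k + 1) ≥ exp (-(2k + 1 - n) / (n - k))`, and the exponents
`2k + 1 - n` telescope to squares. Hence `C(n, k) ≥ C(n, ⌊n/2⌋) exp (-(k - n/2)² / D)` as long as
`D ≤ n - k + 1`, while `C(n, ⌊n/2⌋) ≥ 2ⁿ / √(2(n + 1))`. The tail of `Bin(n, 1/2)` beyond
`n/2 + t√n` is at least the mass of its first `L` points, where `√n/4 ≤ L ≤ √n`; since `t ≤ √n/8`,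
all of them satisfy the constraint with `D = n/4`. Writing `L = c√n`, it remains to see that
`exp (-4(t + 1)²) ≤ c exp (-4(t + c)²)`: the gap between `1` and `c` in the exponent pays for the
factor `c`.
-/

open ProbabilityTheory

section Law

/-- The success probability `1/2` as a point of the unit interval, the type in which the parameter
of the binomial distribution lives. -/
noncomputable def oneHalf : unitInterval := ⟨1 / 2, by norm_num, by norm_num⟩

lemma binomial_oneHalf_singleton (n k : ℕ) :
    binomial n oneHalf {k} = ENNReal.ofReal (n.choose k / 2 ^ n) := by
  rw [binomial_singleton]
  rcases le_or_gt k n with hkn | hnk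
  · have hsymm : (1 - oneHalf : ℝ) = oneHalf := sub_half 1
    rw [hsymm, mul_assoc, ← pow_add, Nat.add_sub_cancel' hkn, oneHalf, one_div_pow, mul_one_div]
  · simp only [Nat.choose_eq_zero_of_lt hnk, Nat.cast_zero, zero_mul, zero_div]

lemma uniformBits_singleton (n : ℕ) (ω : Fin n → Bool) :
    uniformBits n {ω} = ENNReal.ofReal (1 / 2 ^ n) := by
  have fair_bit (b : Bool) :
      (PMF.bernoulli (1 / 2) (by norm_num)).toMeasure {b} = ENNReal.ofReal (1 / 2) := by
    rw [PMF.toMeasure_apply_singleton _ _ (measurableSet_singleton b)]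
    cases b <;> simp [PMF.bernoulli_apply]
  rw [uniformBits, Measure.pi_singleton]
  simp only [fair_bit, Finset.prod_const, Finset.card_univ, Fintype.card_fin]
  rw [← ENNReal.ofReal_pow (by norm_num), one_div_pow]

lemma card_filter_onesCount_eq (n k : ℕ) :
    (Finset.univ.filter fun ω : Fin n → Bool => onesCount ω = k).card = n.choose k := by
  trans (Finset.powersetCard k (Finset.univ : Finset (Fin n))).card
  · refine Finset.card_bij' (fun ω _ => Finset.univ.filter fun i => ω i = true)
      (fun s _ i => decide (i ∈ s)) ?_ ?_ ?_ ?_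
    · exact fun ω hω => Finset.mem_powersetCard_univ.mpr ((Finset.mem_filter_univ ω).mp hω)
    · exact fun s hs => (Finset.mem_filter_univ _).mpr (by simpa [onesCount] using hs)
    · exact fun ω _ => by ext; simp
    · exact fun s _ => by ext; simp
  · rw [Finset.card_powersetCard, Finset.card_fin]

theorem map_onesCount_uniformBits (n : ℕ) :
    (uniformBits n).map onesCount = binomial n oneHalf := by
  refine Measure.ext_of_singleton fun k => ?_
  have preimage_eq : (onesCount ⁻¹' {k} : Set (Fin n → Bool)) =
      (Finset.univ.filter fun ω : Fin n → Bool => onesCount ω = k : Finset _) := by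
    ext ω; simp
  rw [binomial_oneHalf_singleton, Measure.map_apply .of_discrete (measurableSet_singleton k),
    preimage_eq, ← sum_measure_singleton]
  simp only [uniformBits_singleton, Finset.sum_const, card_filter_onesCount_eq, nsmul_eq_mul]
  rw [← ENNReal.ofReal_natCast, ← ENNReal.ofReal_mul (by positivity), mul_one_div]

end Law

section MiddleCoefficient

lemma sixteen_pow_le_mul_centralBinom_sq {m : ℕ} (hm : 1 ≤ m) :
    16 ^ m ≤ 4 * m * m.centralBinom ^ 2 := by
  induction m, hm using Nat.le_induction with
  | base => simp [Nat.centralBinom_eq_two_mul_choose]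
  | succ m _ ih =>
    have recurrence := Nat.succ_mul_centralBinom_succ m
    refine Nat.le_of_mul_le_mul_left ?_ m.succ_pos
    calc (m + 1) * 16 ^ (m + 1) = 16 * (m + 1) * 16 ^ m := by ring
      _ ≤ 16 * (m + 1) * (4 * m * m.centralBinom ^ 2) := by gcongr
      _ = 16 * (4 * m * (m + 1)) * m.centralBinom ^ 2 := by ring
      _ ≤ 16 * (2 * m + 1) ^ 2 * m.centralBinom ^ 2 := by gcongr; linarith
      _ = 4 * (2 * (2 * m + 1) * m.centralBinom) ^ 2 := by ring
      _ = 4 * ((m + 1) * (m + 1).centralBinom) ^ 2 := by rw [recurrence]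
      _ = (m + 1) * (4 * (m + 1) * (m + 1).centralBinom ^ 2) := by ring

lemma centralBinom_succ_eq_two_mul_choose (m : ℕ) :
    (m + 1).centralBinom = 2 * (2 * m + 1).choose m := by
  rw [Nat.centralBinom_eq_two_mul_choose, show 2 * (m + 1) = 2 * m + 1 + 1 by ring,
    Nat.choose_succ_succ, Nat.choose_symm_half, ← two_mul]

lemma four_pow_le_mul_choose_half_sq (n : ℕ) :
    4 ^ n ≤ 2 * (n + 1) * n.choose (n / 2) ^ 2 := by
  rcases Nat.even_or_odd' n with ⟨m, rfl | rfl⟩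
  · rw [Nat.mul_div_cancel_left m two_pos, ← Nat.centralBinom_eq_two_mul_choose, pow_mul]
    rcases Nat.eq_zero_or_pos m with rfl | hm
    · simp
    · refine (sixteen_pow_le_mul_centralBinom_sq hm).trans (Nat.mul_le_mul_right _ ?_)
      lia
  · have central := sixteen_pow_le_mul_centralBinom_sq m.succ_pos
    rw [Nat.succ_eq_add_one, centralBinom_succ_eq_two_mul_choose] at central
    rw [show (2 * m + 1) / 2 = m by lia]
    refine Nat.le_of_mul_le_mul_left ?_ four_pos
    calc 4 * 4 ^ (2 * m + 1) = 16 ^ (m + 1) := by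
          rw [← pow_succ', show 2 * m + 1 + 1 = 2 * (m + 1) by ring, pow_mul]; norm_num
      _ ≤ 4 * (m + 1) * (2 * (2 * m + 1).choose m) ^ 2 := central
      _ = 4 * (2 * (2 * m + 1 + 1) * (2 * m + 1).choose m ^ 2) := by ring

lemma two_pow_le_sqrt_mul_choose_half (n : ℕ) :
    (2 : ℝ) ^ n ≤ √(2 * (n + 1)) * n.choose (n / 2) := by
  refine le_of_sq_le_sq ?_ (by positivity)
  rw [mul_pow, Real.sq_sqrt (by positivity), ← pow_mul, mul_comm n, pow_mul]
  norm_num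
  exact_mod_cast four_pow_le_mul_choose_half_sq n

end MiddleCoefficient

section GaussianDecay

variable {n k : ℕ} {D : ℝ}

lemma choose_mul_exp_le_choose_succ (hD : 0 < D) (hnk : n ≤ 2 * k + 1) (hDk : D ≤ n - k) :
    n.choose k * Real.exp (-((2 * k + 1 - n) / D)) ≤ n.choose (k + 1) := by
  have hkn : k ≤ n := by
    have : (k : ℝ) ≤ n := by linarith
    exact_mod_cast this
  have recurrence : (n.choose (k + 1) : ℝ) * (k + 1) = n.choose k * (n - k) := by
    rw [← Nat.cast_sub hkn]
    exact_mod_cast Nat.choose_succ_right_eq n k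
  set x : ℝ := (2 * k + 1 - n) / D with hx
  have hx0 : 0 ≤ x := by
    have : (n : ℝ) ≤ 2 * k + 1 := by exact_mod_cast hnk
    exact div_nonneg (by linarith) hD.le
  have ratio : (k + 1 : ℝ) ≤ (n - k) * Real.exp x :=
    calc (k + 1 : ℝ) = D * x + (n - k) := by rw [hx, mul_div_cancel₀ _ hD.ne']; ring
      _ ≤ (n - k) * x + (n - k) := by gcongr
      _ = (n - k) * (x + 1) := by ring
      _ ≤ (n - k) * Real.exp x :=
          mul_le_mul_of_nonneg_left (Real.add_one_le_exp x) (hD.le.trans hDk)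
  rw [Real.exp_neg, ← div_eq_mul_inv, div_le_iff₀ (Real.exp_pos x)]
  refine le_of_mul_le_mul_right ?_ (show (0 : ℝ) < k + 1 by positivity)
  calc (n.choose k : ℝ) * (k + 1) ≤ n.choose k * ((n - k) * Real.exp x) := by gcongr
    _ = n.choose (k + 1) * (k + 1) * Real.exp x := by rw [recurrence, mul_assoc]
    _ = n.choose (k + 1) * Real.exp x * (k + 1) := mul_right_comm ..

-- `n / 2` is truncated in `choose` and in `hnk`, but is a real quotient in the exponent.
theorem choose_half_mul_exp_le_choose (hD : 0 < D) (hnk : n / 2 ≤ k) (hDk : D ≤ n - k + 1) :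
    n.choose (n / 2) * Real.exp (-((k - n / 2) ^ 2 / D)) ≤ n.choose k := by
  induction k, hnk using Nat.le_induction with
  | base =>
    refine mul_le_of_le_one_right (by positivity) (Real.exp_le_one_iff.mpr ?_)
    exact neg_nonpos.mpr (by positivity)
  | succ k hnk ih =>
    push_cast at hDk ⊢
    have telescope : -((k + 1 - n / 2 : ℝ) ^ 2 / D) =
        -((k - n / 2) ^ 2 / D) + -((2 * k + 1 - n) / D) := by ring
    rw [telescope, Real.exp_add, ← mul_assoc]
    calc _ ≤ n.choose k * Real.exp (-((2 * k + 1 - n) / D)) := by gcongr; exact ih (by linarith)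
      _ ≤ n.choose (k + 1) := choose_mul_exp_le_choose_succ hD (by lia) (by linarith)

lemma exp_neg_div_sqrt_le_binomial_real_singleton (hD : 0 < D) (hnk : n / 2 ≤ k)
    (hDk : D ≤ n - k + 1) :
    Real.exp (-((k - n / 2) ^ 2 / D)) / √(2 * (n + 1)) ≤ (binomial n oneHalf).real {k} := by
  rw [measureReal_def, binomial_oneHalf_singleton, ENNReal.toReal_ofReal (by positivity),
    div_le_div_iff₀ (by positivity) (by positivity)]
  calc Real.exp (-((k - n / 2) ^ 2 / D)) * 2 ^ n
      ≤ Real.exp (-((k - n / 2) ^ 2 / D)) * (√(2 * (n + 1)) * n.choose (n / 2)) := by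
        gcongr; exact two_pow_le_sqrt_mul_choose_half n
    _ = n.choose (n / 2) * Real.exp (-((k - n / 2) ^ 2 / D)) * √(2 * (n + 1)) := by ring
    _ ≤ n.choose k * √(2 * (n + 1)) := by gcongr; exact choose_half_mul_exp_le_choose hD hnk hDk

end GaussianDecay

theorem mul_exp_neg_div_sqrt_le_binomial_real_tail {n L : ℕ} {a D : ℝ} (ha : 0 ≤ a) (hD : 0 < D)
    (hDaL : D + a + L ≤ n / 2 + 1) :
    L * (Real.exp (-((a + L) ^ 2 / D)) / √(2 * (n + 1))) ≤
      (binomial n oneHalf).real {k | a ≤ k - n / 2} := by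
  set K := ⌈(n : ℝ) / 2 + a⌉₊
  have hK : (n : ℝ) / 2 + a ≤ K := Nat.le_ceil _
  have hK' : (K : ℝ) < n / 2 + a + 1 := Nat.ceil_lt_add_one (by positivity)
  set window := Finset.Ico K (K + L)
  have window_subset : (window : Set ℕ) ⊆ {k | a ≤ k - n / 2} := by
    intro k hk
    have : (K : ℝ) ≤ k := by exact_mod_cast (Finset.mem_Ico.mp hk).1
    rw [Set.mem_ofPred_eq]
    linarith
  have mass_lower_bound : ∀ k ∈ window,
      Real.exp (-((a + L) ^ 2 / D)) / √(2 * (n + 1)) ≤ (binomial n oneHalf).real {k} := by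
    intro k hk
    have hak : a ≤ k - n / 2 := window_subset hk
    have hkL : (k : ℝ) + 1 ≤ K + L := by exact_mod_cast (Finset.mem_Ico.mp hk).2
    have hnk : n / 2 ≤ k := by
      have : (n : ℝ) ≤ 2 * k := by linarith
      have : n ≤ 2 * k := by exact_mod_cast this
      lia
    refine le_trans ?_ (exp_neg_div_sqrt_le_binomial_real_singleton hD hnk (by linarith))
    have : (0 : ℝ) ≤ k - n / 2 := ha.trans hak
    gcongr
    linarith
  calc L * (Real.exp (-((a + L) ^ 2 / D)) / √(2 * (n + 1)))
      = window.card • (Real.exp (-((a + L) ^ 2 / D)) / √(2 * (n + 1))) := by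
        rw [Nat.card_Ico, Nat.add_sub_cancel_left, nsmul_eq_mul]
    _ ≤ ∑ k ∈ window, (binomial n oneHalf).real {k} :=
        Finset.card_nsmul_le_sum _ _ _ mass_lower_bound
    _ = (binomial n oneHalf).real window := sum_measureReal_singleton window
    _ ≤ _ := measureReal_mono window_subset

lemma exp_neg_sq_le_mul_exp_neg_sq {t c : ℝ} (ht : 0 ≤ t) (hc : 1 / 4 ≤ c) (hc1 : c ≤ 1) :
    Real.exp (-4 * (t + 1) ^ 2) ≤ c * Real.exp (-4 * (t + c) ^ 2) := by
  have one_le : 1 ≤ c * Real.exp (4 * (1 - c ^ 2)) :=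
    calc 1 ≤ 1 + (1 - c) * (4 * c ^ 2 + 4 * c - 1) := by
          have : 0 ≤ 4 * c ^ 2 + 4 * c - 1 := by nlinarith
          exact le_add_of_nonneg_right (mul_nonneg (by linarith) this)
      _ = c * (4 * (1 - c ^ 2) + 1) := by ring
      _ ≤ c * Real.exp (4 * (1 - c ^ 2)) := by gcongr; exact Real.add_one_le_exp _
  calc Real.exp (-4 * (t + 1) ^ 2)
      ≤ c * Real.exp (4 * (1 - c ^ 2)) * Real.exp (-4 * (t + 1) ^ 2) :=
        le_mul_of_one_le_left (Real.exp_nonneg _) one_le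
    _ = c * Real.exp (4 * (1 - c ^ 2) + -4 * (t + 1) ^ 2) := by rw [Real.exp_add, mul_assoc]
    _ ≤ c * Real.exp (-4 * (t + c) ^ 2) := by gcongr; nlinarith

lemma exists_nat_quarter_le_and_le {x : ℝ} (hx : 1 ≤ x) :
    ∃ L : ℕ, x / 4 ≤ L ∧ L ≤ x ∧ L ≤ x ^ 2 / 8 + 1 := by
  rcases le_total x 4 with hx4 | hx4
  · exact ⟨1, by norm_num; linarith, by simpa using hx, by norm_num; positivity⟩
  · have hL : (⌈x / 4⌉₊ : ℝ) < x / 4 + 1 := Nat.ceil_lt_add_one (by positivity)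
    exact ⟨⌈x / 4⌉₊, Nat.le_ceil _, by linarith, by nlinarith⟩

lemma sqrt_two_mul_succ_le_sqrt_two_pi_mul_sqrt {n : ℕ} (hn : 0 < n) :
    √(2 * (n + 1)) ≤ √(2 * Real.pi) * √n := by
  have hn1 : (1 : ℝ) ≤ n := by exact_mod_cast hn
  rw [← Real.sqrt_mul (by positivity)]
  refine Real.sqrt_le_sqrt ?_
  nlinarith [Real.pi_gt_three]

theorem exp_div_sqrt_two_pi_le_binomial_real_tail {n : ℕ} (hn : 0 < n) {t : ℝ} (ht0 : 0 ≤ t)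
    (ht : t ≤ √n / 8) :
    Real.exp (-4 * (t + 1) ^ 2) / √(2 * Real.pi) ≤
      (binomial n oneHalf).real {k | t * √n ≤ k - n / 2} := by
  have hn1 : (1 : ℝ) ≤ n := by exact_mod_cast hn
  have hsq : √(n : ℝ) ^ 2 = n := Real.sq_sqrt (by positivity)
  have hsqrt : 0 < √(n : ℝ) := by positivity
  obtain ⟨L, hL_ge, hL_le, hL_le_sq⟩ := exists_nat_quarter_le_and_le (Real.one_le_sqrt.mpr hn1)
  set c := L / √(n : ℝ) with hc
  have hL : (L : ℝ) = c * √n := (div_mul_cancel₀ _ hsqrt.ne').symm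
  have exponent_eq : -4 * (t + c) ^ 2 = -((t * √n + L) ^ 2 / (n / 4)) := by
    rw [hL, ← add_mul, mul_pow, hsq]
    field_simp
  calc Real.exp (-4 * (t + 1) ^ 2) / √(2 * Real.pi)
      ≤ c * Real.exp (-4 * (t + c) ^ 2) / √(2 * Real.pi) := by
        gcongr
        refine exp_neg_sq_le_mul_exp_neg_sq ht0 ?_ ((div_le_one hsqrt).mpr hL_le)
        rw [hc, le_div_iff₀ hsqrt]
        linarith
    _ = L * (Real.exp (-4 * (t + c) ^ 2) / (√(2 * Real.pi) * √n)) := by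
        rw [hc]; field_simp
    _ ≤ L * (Real.exp (-4 * (t + c) ^ 2) / √(2 * (n + 1))) := by
        gcongr; exact sqrt_two_mul_succ_le_sqrt_two_pi_mul_sqrt hn
    _ ≤ (binomial n oneHalf).real {k | t * √n ≤ k - n / 2} := by
        rw [exponent_eq]
        exact mul_exp_neg_div_sqrt_le_binomial_real_tail (by positivity) (by positivity)
          (by nlinarith)

/-- Anti-concentration for `Binomial(n, 1/2)`: for `0 ≤ t ≤ √n / 8`, the number
of ones among `n` independent uniform bits exceeds its mean `n/2` by at least
`t·√n` with probability at least `e^{-4(t+1)²}/√(2π)`. -/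
theorem statement8 (n : ℕ) (hn : 0 < n) (t : ℝ) (ht0 : 0 ≤ t)
    (ht : t ≤ Real.sqrt n / 8) :
    ENNReal.ofReal (Real.exp (-4 * (t + 1) ^ 2) / Real.sqrt (2 * Real.pi)) ≤
      uniformBits n {ω | t * Real.sqrt n ≤ (onesCount ω : ℝ) - (n : ℝ) / 2} := by
  calc ENNReal.ofReal (Real.exp (-4 * (t + 1) ^ 2) / √(2 * Real.pi))
      ≤ binomial n oneHalf {k | t * √n ≤ (k : ℝ) - n / 2} :=
        (ENNReal.ofReal_le_iff_le_toReal (measure_ne_top _ _)).mpr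
          (exp_div_sqrt_two_pi_le_binomial_real_tail hn ht0 ht)
    _ = uniformBits n {ω | t * √n ≤ (onesCount ω : ℝ) - n / 2} := by
        rw [← map_onesCount_uniformBits, Measure.map_apply .of_discrete .of_discrete,
          Set.preimage_ofPred_eq]
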